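/- There exists an absolute constant c > 0 with the following property. Let m, T, N be positive integers, let V_0,…,V_T ∈ U(4m) be fixed unitaries, and let F : U(4)^T → U(4m) be the circuit map F(U_1,…,U_T) = V_T (U_T ⊗ I_m) ⋯ V_1 (U_1 ⊗ I_m) V_0. Fix a reference parameter setting θ⁰ = (U⁰_1,…,U⁰_T) ∈ U(4)^T. Let Z be a measurable space with probability measure μ, ρ : Z → ℂ^{4m×4m} measurable with density-matrix values, C > 0, and O : Z → ℂ^{4m×4m} measurable with Hermitian values satisfying ‖O_z‖ ≤ C. Define ℓ(θ; z) = Re Tr(O_z · F(θ) · ρ(z) · F(θ)*), R(θ) = ∫ ℓ(θ; z) dμ(z), and R̂_S(θ) = (1/N) Σ_{i=1}^N ℓ(θ; z_i) for S ∈ Z^N. Then for every δ ∈ (0,1), with probability at least 1 − δ over S ~ μ^{⊗N}, simultaneously for every θ = (U_1,…,U_T) ∈ U(4)^T, every K ∈ {0,1,…,T}, and every set of K pairwise distinct indices t_1,…,t_K ∈ {1,…,T}: R(θ) − R̂_S(θ) ≤ c · C · ( √(K(1 + log T)/N) + Σ_{t ∉ {t_1,…,t_K}} ‖U_t − U⁰_t‖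 + √(log(2/δ)/N) ). In particular, if an optimization procedure starting from θ⁰ outputs θ*(S) in which only few gates moved substantially, the generalization error of θ*(S) is controlled by the number of substantially changed gates plus the total movement of the remaining gates. -/

import Mathlib

open MeasureTheory Matrix
open scoped Kronecker ComplexOrder

/-- The ℓ²→ℓ² operator norm (spectral norm) of a complex square matrix. -/
noncomputable def opNorm {n : Type*} [Fintype n] [DecidableEq n] (A : Matrix n n ℂ) : ℝ :=
  ‖Matrix.toEuclideanCLM (𝕜 := ℂ) A‖

/-- The variational unitary circuit: `circuit V U L = V L * (U (L-1) ⊗ I) * ⋯ * (U 0 ⊗ I) * V 0`,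
i.e. `L` layers of 2-qubit gates interleaved with fixed global unitaries on `ℂ^{4m}`. -/
noncomputable def circuit {m : ℕ} (V : ℕ → Matrix (Fin 4 × Fin m) (Fin 4 × Fin m) ℂ)
    (U : ℕ → Matrix (Fin 4) (Fin 4) ℂ) : ℕ → Matrix (Fin 4 × Fin m) (Fin 4 × Fin m) ℂ
  | 0 => V 0
  | (t + 1) => V (t + 1) * (U t ⊗ₖ (1 : Matrix (Fin m) (Fin m) ℂ)) * circuit V U t

/-- The loss `ℓ(θ; z) = Re Tr(O_z · F(θ) · ρ(z) · F(θ)*)`. -/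
noncomputable def qloss {m : ℕ} {Z : Type*}
    (V : ℕ → Matrix (Fin 4 × Fin m) (Fin 4 × Fin m) ℂ) (L : ℕ)
    (O ρ : Z → Matrix (Fin 4 × Fin m) (Fin 4 × Fin m) ℂ)
    (U : ℕ → Matrix (Fin 4) (Fin 4) ℂ) (z : Z) : ℝ :=
  ((O z * circuit V U L * ρ z * (circuit V U L)ᴴ).trace).re

/-!
Fix a set `ts` of moved gates. The unitaries lie in the unit ball of a real normed space of
dimension `32`, so volume comparison covers the tuples indexed by `ts` by `(3 / ε) ^ (32 * |ts|)`
balls of radius `ε`. As the loss is Lipschitz for the operator-norm distance of the gates, chaining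
along covers at scales `4⁻ʲ`, with Hoeffding's inequality on each link, bounds the gap for all
circuits that agree with the reference off `ts`; the entropy is of order `|ts| (1 + log T)`, the
`log T` coming from the Lipschitz constant. A union bound over `ts` costs `log` of the number of
sets of each size, again `|ts| (1 + log T)`. Finally, resetting the gates off `ts` to the reference
changes the gap by at most a constant times their total movement.
-/

open scoped NNReal ENNReal Topology

section GeneralizationGap

open ProbabilityTheory

variable {Z : Type*} [MeasurableSpace Z] {N : ℕ}

/-- The generalization gap of `f` on the sample `S`: its mean under `μ` minus its empirical
average. -/
noncomputable def generalizationGap (μ : Measure Z) (S : Fin N → Z) (f : Z → ℝ) : ℝ :=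
  (∫ z, f z ∂μ) - (1 / N) * ∑ i, f (S i)

variable {μ : Measure Z} {S : Fin N → Z} {f g : Z → ℝ} {b s : ℝ}

theorem generalizationGap_sub (hf : Integrable f μ) (hg : Integrable g μ) :
    generalizationGap μ S (f - g) = generalizationGap μ S f - generalizationGap μ S g := by
  simp only [generalizationGap, Pi.sub_apply, integral_sub hf hg, Finset.sum_sub_distrib]
  ring

theorem generalizationGap_zero : generalizationGap μ S 0 = 0 := by
  simp [generalizationGap]

theorem integrable_of_abs_le [IsFiniteMeasure μ] (hf : Measurable f) (hb : ∀ z, |f z| ≤ b) :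
    Integrable f μ :=
  Integrable.of_bound hf.aestronglyMeasurable b (Filter.Eventually.of_forall hb)

variable [IsProbabilityMeasure μ]

theorem generalizationGap_le_of_abs_le (hN : 0 < N) (hb : ∀ z, |f z| ≤ b) :
    generalizationGap μ S f ≤ 2 * b := by
  have hmean : ∫ z, f z ∂μ ≤ b := by
    simpa using (Real.le_norm_self _).trans (norm_integral_le_of_norm_le_const (μ := μ)
      (f := f) (Filter.Eventually.of_forall hb))
  have hsum : ∑ _i : Fin N, (-b) ≤ ∑ i, f (S i) :=
    Finset.sum_le_sum fun i _ => (abs_le.mp (hb (S i))).1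
  have haverage : -b ≤ (1 / N) * ∑ i, f (S i) := by
    rw [one_div, ← div_eq_inv_mul, le_div_iff₀ (by exact_mod_cast hN)]
    simpa [mul_comm] using hsum
  unfold generalizationGap
  linarith

theorem hasSubgaussianMGF_integral_sub (hf : Measurable f) (hb : ∀ z, |f z| ≤ b) :
    HasSubgaussianMGF (fun z => ∫ z, f z ∂μ - f z) (‖b‖₊ ^ 2) μ := by
  have hneg : ∀ᵐ z ∂μ, (-f) z ∈ Set.Icc (-b) b :=
    .of_forall fun z => ⟨neg_le_neg (abs_le.mp (hb z)).2, neg_le.mp (abs_le.mp (hb z)).1⟩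
  have hwidth : ‖b - -b‖₊ / 2 = ‖b‖₊ := by
    rw [sub_neg_eq_add, ← two_mul, nnnorm_mul, Real.nnnorm_two, mul_div_cancel_left₀ _ two_ne_zero]
  have := hasSubgaussianMGF_of_mem_Icc hf.neg.aemeasurable hneg
  rw [hwidth] at this
  simpa [integral_neg, neg_add_eq_sub] using this

/- Hoeffding's inequality, applied to the independent centred variables `𝔼 f - f (S i)`, whose
average is the gap. -/
theorem measure_lt_generalizationGap_le (hN : 0 < N) (hf : Measurable f) (hb : ∀ z, |f z| ≤ b)
    (hs : 0 ≤ s) :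
    (Measure.pi fun _ : Fin N => μ) {S | s < generalizationGap μ S f}
      ≤ ENNReal.ofReal (Real.exp (-(N * s ^ 2 / (2 * b ^ 2)))) := by
  have : (0 : ℝ) < N := by exact_mod_cast hN
  have hsubgaussian : ∀ i ∈ (Finset.univ : Finset (Fin N)),
      HasSubgaussianMGF (fun S : Fin N → Z => ∫ z, f z ∂μ - f (S i)) (‖b‖₊ ^ 2)
        (Measure.pi fun _ : Fin N => μ) := by
    intro i _
    have heval := measurePreserving_eval (fun _ : Fin N => μ) i
    have h := hasSubgaussianMGF_integral_sub (μ := μ) hf hb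
    rw [← heval.map_eq] at h
    simpa only [heval.map_eq] using! h.of_map heval.measurable.aemeasurable
  have hindep : iIndepFun (fun (i : Fin N) (S : Fin N → Z) => ∫ z, f z ∂μ - f (S i))
      (Measure.pi fun _ : Fin N => μ) :=
    iIndepFun_pi (X := fun _ z => ∫ z, f z ∂μ - f z) fun _ => (hf.const_sub _).aemeasurable
  have hsum : ∀ S : Fin N → Z,
      ∑ i, (∫ z, f z ∂μ - f (S i)) = N * generalizationGap μ S f := fun S => by
    simp only [generalizationGap, Finset.sum_sub_distrib, Finset.sum_const, Finset.card_univ,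
      Fintype.card_fin, nsmul_eq_mul]
    field_simp
  have hoeffding := HasSubgaussianMGF.measure_sum_ge_le_of_iIndepFun hindep hsubgaussian
    (ε := N * s) (by positivity)
  rw [← ofReal_measureReal]
  refine ENNReal.ofReal_le_ofReal ((measureReal_mono fun S hS => ?_).trans
    (hoeffding.trans_eq (congrArg Real.exp ?_)))
  · simp only [Set.mem_ofPred_eq, hsum] at hS ⊢
    gcongr
  · simp only [Finset.sum_const, Finset.card_univ, Fintype.card_fin, nsmul_eq_mul,
      NNReal.coe_mul, NNReal.coe_natCast, NNReal.coe_pow, coe_nnnorm, Real.norm_eq_abs, sq_abs]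
    field_simp

theorem measure_exists_lt_generalizationGap_sub_le {P Q : Finset (Z → ℝ)} (hN : 0 < N)
    (hP : ∀ g ∈ P, Measurable g) (hQ : ∀ f ∈ Q, Measurable f) (hs : 0 ≤ s) :
    (Measure.pi fun _ : Fin N => μ) {S | ∃ g ∈ P, ∃ f ∈ Q,
        (∀ z, |f z - g z| ≤ b) ∧ s < generalizationGap μ S (f - g)}
      ≤ ENNReal.ofReal (P.card * Q.card * Real.exp (-(N * s ^ 2 / (2 * b ^ 2)))) := by
  classical
  let links := (P ×ˢ Q).filter fun p => ∀ z, |p.2 z - p.1 z| ≤ b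
  have hcard : (links.card : ℝ) ≤ P.card * Q.card := by
    exact_mod_cast (Finset.card_filter_le _ _).trans_eq (Finset.card_product P Q)
  calc (Measure.pi fun _ : Fin N => μ) {S | ∃ g ∈ P, ∃ f ∈ Q,
        (∀ z, |f z - g z| ≤ b) ∧ s < generalizationGap μ S (f - g)}
      ≤ (Measure.pi fun _ : Fin N => μ)
          (⋃ p ∈ links, {S | s < generalizationGap μ S (p.2 - p.1)}) :=
        measure_mono fun S ⟨g, hg, f, hf, hfg, hS⟩ => Set.mem_iUnion₂.mpr
          ⟨(g, f), Finset.mem_filter.mpr ⟨Finset.mk_mem_product hg hf, hfg⟩, hS⟩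
    _ ≤ ∑ p ∈ links, (Measure.pi fun _ : Fin N => μ)
          {S | s < generalizationGap μ S (p.2 - p.1)} := measure_biUnion_finset_le _ _
    _ ≤ ∑ _p ∈ links, ENNReal.ofReal (Real.exp (-(N * s ^ 2 / (2 * b ^ 2)))) := by
        refine Finset.sum_le_sum fun p hp => ?_
        obtain ⟨hpPQ, hpb⟩ := Finset.mem_filter.mp hp
        obtain ⟨hpP, hpQ⟩ := Finset.mem_product.mp hpPQ
        exact measure_lt_generalizationGap_le hN ((hQ _ hpQ).sub (hP _ hpP)) hpb hs
    _ = ENNReal.ofReal (links.card * Real.exp (-(N * s ^ 2 / (2 * b ^ 2)))) := by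
        rw [Finset.sum_const, nsmul_eq_mul, ENNReal.ofReal_mul (Nat.cast_nonneg _),
          ENNReal.ofReal_natCast]
    _ ≤ ENNReal.ofReal (P.card * Q.card * Real.exp (-(N * s ^ 2 / (2 * b ^ 2)))) := by gcongr

end GeneralizationGap

section Covering

/-- The set `A` has internal finite covers with at most `(G / ε) ^ D` points at all scales
`ε ∈ (0, 1]`, so that its metric entropy at scale `ε` is at most `D log (G / ε)`. -/
def HasPolynomialCovers {Y : Type*} [PseudoEMetricSpace Y] (A : Set Y) (G : ℝ) (D : ℕ) : Prop :=
  ∀ ε : ℝ≥0, 0 < ε → ε ≤ 1 →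
    ∃ C : Finset Y, ↑C ⊆ A ∧ Metric.IsCover ε A C ∧ (C.card : ℝ) ≤ (G / ε) ^ D

/-- `F` is a finite `ε`-cover, in the uniform distance, of the class `𝓕` of functions; its members
need not belong to `𝓕`. -/
def IsUniformCover {Z : Type*} (𝓕 : Set (Z → ℝ)) (ε : ℝ) (F : Finset (Z → ℝ)) : Prop :=
  ∀ f ∈ 𝓕, ∃ g ∈ F, ∀ z, |f z - g z| ≤ ε

theorem HasPolynomialCovers.exists_isUniformCover_image {Y Z : Type*} [PseudoMetricSpace Y]
    {A : Set Y} {f : Y → Z → ℝ} {G L b : ℝ} {D : ℕ} (hA : HasPolynomialCovers A G D)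
    (hb : 0 ≤ b) (hL : 1 ≤ L)
    (hfL : ∀ y ∈ A, ∀ y' ∈ A, ∀ z, |f y z - f y' z| ≤ b * (L * dist y y')) {ε : ℝ≥0}
    (hε₀ : 0 < ε) (hε₁ : ε ≤ 1) :
    ∃ F : Finset (Z → ℝ), (F : Set (Z → ℝ)) ⊆ f '' A ∧ IsUniformCover (f '' A) (b * ε) F ∧
      (F.card : ℝ) ≤ (G * L / ε) ^ D := by
  classical
  lift L to ℝ≥0 using zero_le_one.trans hL
  have hL₀ : 0 < L := one_pos.trans_le hL
  obtain ⟨C, hCA, hcover, hcard⟩ := hA (ε / L) (div_pos hε₀ hL₀) (div_le_one_of_le₀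
    (hε₁.trans hL) L.2)
  refine ⟨C.image f, by simpa using Set.image_mono hCA, ?_, ?_⟩
  · rintro _ ⟨y, hy, rfl⟩
    obtain ⟨c, hc, hyc⟩ := hcover hy
    refine ⟨f c, Finset.mem_image_of_mem f hc, fun z => (hfL y hy c (hCA hc) z).trans ?_⟩
    have hdist : dist y c ≤ ε / L := by
      rw [← NNReal.coe_div, ← coe_nndist, NNReal.coe_le_coe, ← ENNReal.coe_le_coe, ← edist_nndist]
      exact hyc
    gcongr
    rwa [mul_comm, ← le_div_iff₀ (by exact_mod_cast hL₀)]
  · rw [NNReal.coe_div, div_div_eq_mul_div] at hcard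
    exact (Nat.cast_le.mpr Finset.card_image_le).trans hcard

variable {E : Type*} [NormedAddCommGroup E] [NormedSpace ℝ E] [FiniteDimensional ℝ E]

/- The balls of radius `ε / 2` around the points of `C` are disjoint and contained in the ball of
radius `1 + ε / 2`; compare volumes. -/
theorem card_le_of_isSeparated_of_subset_closedBall {C : Finset E} {ε : ℝ≥0} (hε : 0 < ε)
    (hC : (C : Set E) ⊆ Metric.closedBall 0 1) (hsep : Metric.IsSeparated ε (C : Set E)) :
    (C.card : ℝ) ≤ ((1 + ε / 2) / (ε / 2)) ^ Module.finrank ℝ E := by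
  borelize E
  set d := Module.finrank ℝ E
  let ν : Measure E := Measure.addHaar
  have hε' : (0 : ℝ) < ε / 2 := by positivity
  have hdisjoint : (C : Set E).PairwiseDisjoint fun c => Metric.ball c (ε / 2) :=
    fun x hx y hy hxy => Metric.ball_disjoint_ball <| by
      have h : (ε : ℝ≥0∞) < edist x y := hsep hx hy hxy
      rw [edist_nndist, ENNReal.coe_lt_coe, ← NNReal.coe_lt_coe, coe_nndist] at h
      linarith
  have hsubset : ⋃ c ∈ C, Metric.ball c (ε / 2) ⊆ Metric.ball (0 : E) (1 + ε / 2) :=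
    Set.iUnion₂_subset fun c hc => Metric.ball_subset_ball' <| by
      rw [add_comm]
      gcongr
      exact hC hc
  have hvolume : ENNReal.ofReal (C.card * (ε / 2) ^ d) * ν (Metric.ball 0 1)
      ≤ ENNReal.ofReal ((1 + ε / 2) ^ d) * ν (Metric.ball 0 1) :=
    calc ENNReal.ofReal (C.card * (ε / 2) ^ d) * ν (Metric.ball 0 1)
        = ∑ c ∈ C, ν (Metric.ball c (ε / 2)) := by
          simp only [ν.addHaar_ball_of_pos _ hε', Finset.sum_const, nsmul_eq_mul,
            ENNReal.ofReal_mul (Nat.cast_nonneg _), ENNReal.ofReal_natCast, mul_assoc, d]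
      _ = ν (⋃ c ∈ C, Metric.ball c (ε / 2)) :=
          (measure_biUnion_finset hdisjoint fun _ _ => Metric.isOpen_ball.measurableSet).symm
      _ ≤ ν (Metric.ball 0 (1 + ε / 2)) := measure_mono hsubset
      _ = ENNReal.ofReal ((1 + ε / 2) ^ d) * ν (Metric.ball 0 1) :=
          ν.addHaar_ball_of_pos _ (by positivity)
  rw [ENNReal.mul_le_mul_iff_left (Metric.measure_ball_pos _ _ one_pos).ne'
    measure_ball_lt_top.ne, ENNReal.ofReal_le_ofReal_iff (by positivity)] at hvolume
  rwa [div_pow, le_div_iff₀ (by positivity)]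

theorem packingNumber_le_of_subset_closedBall {A : Set E} {ε : ℝ≥0} (hε : 0 < ε)
    (hA : A ⊆ Metric.closedBall 0 1) :
    Metric.packingNumber ε A ≤ ⌊((1 + ε / 2) / (ε / 2) : ℝ) ^ Module.finrank ℝ E⌋₊ := by
  refine iSup_le fun C => iSup₂_le fun hCA hsep => ?_
  by_contra! hlarge
  obtain ⟨s, hsC, hs⟩ := Set.exists_subset_encard_eq (Order.add_one_le_of_lt hlarge)
  have hfin : s.Finite := Set.finite_of_encard_eq_coe (by exact_mod_cast hs)
  lift s to Finset E using hfin
  have hcard := card_le_of_isSeparated_of_subset_closedBall hε (hsC.trans (hCA.trans hA))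
    (hsep.subset hsC)
  rw [Set.encard_coe_eq_coe_finsetCard] at hs
  norm_cast at hs
  exact (Nat.le_floor hcard).not_gt (hs ▸ Nat.lt_succ_self _)

theorem hasPolynomialCovers_of_subset_closedBall {A : Set E} (hA : A ⊆ Metric.closedBall 0 1) :
    HasPolynomialCovers A 3 (Module.finrank ℝ E) := by
  intro ε hε₀ hε₁
  have hpacking := packingNumber_le_of_subset_closedBall hε₀ hA
  have hfinite := ne_top_of_le_ne_top (ENat.natCast_ne_top _) hpacking
  rw [← Metric.encard_maximalSeparatedSet hfinite] at hpacking
  obtain ⟨hfin, hcard⟩ := Set.encard_le_coe_iff_finite_ncard_le.mp hpacking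
  refine ⟨hfin.toFinset, by simpa using Metric.maximalSeparatedSet_subset,
    by simpa using Metric.isCover_maximalSeparatedSet hfinite, ?_⟩
  rw [← Set.ncard_eq_toFinset_card _ hfin]
  refine ((Nat.le_floor_iff (by positivity)).mp hcard).trans
    (pow_le_pow_left₀ (by positivity) ?_ _)
  rw [div_le_div_iff₀ (by positivity) (by positivity)]
  nlinarith [ε.coe_nonneg, NNReal.coe_le_one.mpr hε₁]

end Covering

section Chaining

variable {Z : Type*} [MeasurableSpace Z] {N : ℕ} {μ : Measure Z} [IsProbabilityMeasure μ]

theorem generalizationGap_le_of_hasSum {S : Fin N → Z} {f : Z → ℝ} {g : ℕ → Z → ℝ} {e s : ℕ → ℝ}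
    {σ : ℝ} (hN : 0 < N) (hf : Integrable f μ) (hg : ∀ j, Integrable (g j) μ) (hg₀ : g 0 = 0)
    (hfg : ∀ j z, |f z - g j z| ≤ e j) (he : Filter.Tendsto e Filter.atTop (𝓝 0))
    (hs : HasSum s σ) (hlink : ∀ j, generalizationGap μ S (g (j + 1) - g j) ≤ s j) :
    generalizationGap μ S f ≤ σ := by
  have htelescope : ∀ n, generalizationGap μ S (g n)
      = ∑ j ∈ Finset.range n, generalizationGap μ S (g (j + 1) - g j) := fun n => by
    rw [Finset.sum_congr rfl fun j _ => generalizationGap_sub (hg (j + 1)) (hg j),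
      Finset.sum_range_sub (fun j => generalizationGap μ S (g j)), hg₀, generalizationGap_zero,
      sub_zero]
  have hpartial : ∀ n, generalizationGap μ S f ≤ 2 * e n + ∑ j ∈ Finset.range n, s j := fun n =>
    calc generalizationGap μ S f
        = generalizationGap μ S (f - g n) + generalizationGap μ S (g n) := by
          rw [generalizationGap_sub hf (hg n), sub_add_cancel]
      _ ≤ 2 * e n + ∑ j ∈ Finset.range n, s j := by
          rw [htelescope]
          exact add_le_add (generalizationGap_le_of_abs_le hN (hfg n))
            (Finset.sum_le_sum fun j _ => hlink j)
  exact ge_of_tendsto' (by simpa using (he.const_mul 2).add hs.tendsto_sum_nat) hpartial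

theorem chaining_entropy_le {γ u : ℝ} (hγ : 0 ≤ γ) (hu : Real.log 2 ≤ u) (D j : ℕ) :
    D * (γ + j * Real.log 4) + D * (γ + (j + 1) * Real.log 4) + (u + j * Real.log 2)
      ≤ 2 * 4 ^ j * (D * (1 + γ) + u) := by
  have hbernoulli : 1 + 3 * (j : ℝ) ≤ 4 ^ j := by
    simpa [mul_comm, show (1 : ℝ) + 3 = 4 by norm_num] using
      one_add_mul_le_pow (show (-2 : ℝ) ≤ 3 by norm_num) j
  have hlog4 : Real.log 4 ≤ 2 := by
    rw [show (4 : ℝ) = 2 ^ 2 by norm_num, Real.log_pow, Nat.cast_ofNat]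
    linarith [Real.log_two_lt_d9]
  have hlog2 : 0 < Real.log 2 := Real.log_pos one_lt_two
  have hj : (0 : ℝ) ≤ j := j.cast_nonneg
  have hdim : (D : ℝ) * ((2 * j + 1) * Real.log 4) ≤ D * (2 * 4 ^ j) :=
    mul_le_mul_of_nonneg_left (by nlinarith) D.cast_nonneg
  have hscale : (D : ℝ) * γ * 2 ≤ D * γ * (2 * 4 ^ j) := by
    gcongr
    linarith
  have hconfidence : u + j * Real.log 2 ≤ 2 * 4 ^ j * u := by
    nlinarith [mul_le_mul_of_nonneg_left hu hj]
  linarith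

theorem card_mul_card_mul_exp_le {Γ δ : ℝ} (hΓ : 1 ≤ Γ) (hδ₀ : 0 < δ) (hδ₁ : δ ≤ 1) (D j : ℕ) :
    (Γ * 4 ^ j) ^ D * (Γ * 4 ^ (j + 1)) ^ D
        * Real.exp (-(2 * 4 ^ j * (D * (1 + Real.log Γ) + Real.log (2 / δ))))
      ≤ δ * (1 / 2) ^ (j + 1) := by
  have hΓ₀ : 0 < Γ := one_pos.trans_le hΓ
  have hlogδ : Real.log δ = Real.log 2 - Real.log (2 / δ) := by
    rw [Real.log_div two_ne_zero hδ₀.ne', sub_sub_cancel]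
  rw [← Real.log_le_log_iff (by positivity) (by positivity),
    Real.log_mul (by positivity) (by positivity), Real.log_mul (by positivity) (by positivity),
    Real.log_mul hδ₀.ne' (by positivity), Real.log_exp, Real.log_pow, Real.log_pow, Real.log_pow,
    Real.log_mul hΓ₀.ne' (by positivity), Real.log_mul hΓ₀.ne' (by positivity), Real.log_pow,
    Real.log_pow, one_div, Real.log_inv, hlogδ]
  have hentropy := chaining_entropy_le (Real.log_nonneg hΓ)
    (Real.log_le_log two_pos ((le_div_iff₀ hδ₀).mpr (by linarith : 2 * δ ≤ 2))) D j
  push_cast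
  linarith

/- The link from scale `4⁻ʲ` to scale `4⁻⁽ʲ⁺¹⁾` has size `2b · 4⁻ʲ`, so Hoeffding's inequality
allows it a gap of order `2⁻ʲ` with a failure probability that beats the number of links by
`2⁻⁽ʲ⁺¹⁾`. -/
theorem measure_exists_chain_link_le {P Q : Finset (Z → ℝ)} {b Γ δ : ℝ} (D j : ℕ) (hN : 0 < N)
    (hb : 0 < b) (hΓ : 1 ≤ Γ) (hδ₀ : 0 < δ) (hδ₁ : δ ≤ 1)
    (hP : ∀ g ∈ P, Measurable g) (hQ : ∀ f ∈ Q, Measurable f)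
    (hPcard : (P.card : ℝ) ≤ (Γ * 4 ^ j) ^ D) (hQcard : (Q.card : ℝ) ≤ (Γ * 4 ^ (j + 1)) ^ D) :
    (Measure.pi fun _ : Fin N => μ) {S | ∃ g ∈ P, ∃ f ∈ Q, (∀ z, |f z - g z| ≤ 2 * b / 4 ^ j) ∧
        4 * b * √((D * (1 + Real.log Γ) + Real.log (2 / δ)) / N) / 2 ^ j
          < generalizationGap μ S (f - g)}
      ≤ ENNReal.ofReal (δ * (1 / 2) ^ (j + 1)) := by
  set H := D * (1 + Real.log Γ) + Real.log (2 / δ)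
  have hN' : (0 : ℝ) < N := by exact_mod_cast hN
  have hH : 0 ≤ H := by
    have := Real.log_nonneg hΓ
    have := Real.log_nonneg ((le_div_iff₀ hδ₀).mpr (by linarith : 1 * δ ≤ 2))
    positivity
  have hexponent : N * (4 * b * √(H / N) / 2 ^ j) ^ 2 / (2 * (2 * b / 4 ^ j) ^ 2)
      = 2 * 4 ^ j * H := by
    have h4 : (4 : ℝ) ^ j = (2 ^ j) ^ 2 := by rw [← pow_mul, mul_comm, pow_mul]; norm_num
    simp only [div_pow, mul_pow, Real.sq_sqrt (div_nonneg hH hN'.le), h4]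
    field_simp
    ring
  refine (measure_exists_lt_generalizationGap_sub_le hN hP hQ
    (by positivity)).trans (ENNReal.ofReal_le_ofReal ?_)
  rw [hexponent]
  refine le_trans ?_ (card_mul_card_mul_exp_le hΓ hδ₀ hδ₁ D j)
  gcongr

theorem exists_chain_link_lt_generalizationGap {𝓕 : Set (Z → ℝ)} {F : ℕ → Finset (Z → ℝ)}
    {S : Fin N → Z} {f : Z → ℝ} {a b : ℝ} (hN : 0 < N) (hb : 0 ≤ b) (hf : f ∈ 𝓕)
    (h𝓕 : Integrable f μ) (hF : ∀ j, ∀ g ∈ F j, Integrable g μ) (hF₀ : F 0 = {0})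
    (hcover : ∀ j, IsUniformCover 𝓕 (b / 4 ^ j) (F j)) (hS : 2 * a < generalizationGap μ S f) :
    ∃ j, ∃ g ∈ F j, ∃ g' ∈ F (j + 1), (∀ z, |g' z - g z| ≤ 2 * b / 4 ^ j) ∧
      a / 2 ^ j < generalizationGap μ S (g' - g) := by
  choose g hgF hg using fun j => hcover j f hf
  by_contra! hsmall
  refine hS.not_ge (generalizationGap_le_of_hasSum hN h𝓕 (fun j => hF j _ (hgF j))
    (by simpa [hF₀] using hgF 0) hg ?_ ?_ fun j => hsmall j _ (hgF j) _ (hgF (j + 1)) fun z => ?_)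
  · simpa [div_eq_mul_inv] using (tendsto_pow_atTop_nhds_zero_of_lt_one (by norm_num)
      (by norm_num : (4 : ℝ)⁻¹ < 1)).const_mul b
  · simpa [div_eq_mul_inv, mul_comm] using hasSum_geometric_two.mul_left a
  · calc |g (j + 1) z - g j z| ≤ |f z - g (j + 1) z| + |f z - g j z| := by
          rw [abs_sub_comm (f z)]
          exact abs_sub_le _ _ _
      _ ≤ b / 4 ^ (j + 1) + b / 4 ^ j := add_le_add (hg _ z) (hg _ z)
      _ ≤ b / 4 ^ j + b / 4 ^ j := by
          gcongr
          · norm_num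
          · exact j.le_succ
      _ = 2 * b / 4 ^ j := by ring

theorem measure_exists_lt_generalizationGap_le_of_isUniformCover
    {𝓕 : Set (Z → ℝ)} {F : ℕ → Finset (Z → ℝ)}
    {b Γ δ : ℝ} {D : ℕ} (hN : 0 < N) (hb : 0 < b) (hΓ : 1 ≤ Γ) (hδ₀ : 0 < δ) (hδ₁ : δ ≤ 1)
    (h𝓕 : ∀ f ∈ 𝓕, Integrable f μ) (hFm : ∀ j, ∀ g ∈ F j, Measurable g)
    (hFi : ∀ j, ∀ g ∈ F j, Integrable g μ) (hF₀ : F 0 = {0})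
    (hcover : ∀ j, IsUniformCover 𝓕 (b / 4 ^ j) (F j))
    (hcard : ∀ j, ((F j).card : ℝ) ≤ (Γ * 4 ^ j) ^ D) :
    (Measure.pi fun _ : Fin N => μ) {S | ∃ f ∈ 𝓕,
        8 * b * √((D * (1 + Real.log Γ) + Real.log (2 / δ)) / N) < generalizationGap μ S f}
      ≤ ENNReal.ofReal δ := by
  set a := 4 * b * √((D * (1 + Real.log Γ) + Real.log (2 / δ)) / N) with ha
  let E : ℕ → Set (Fin N → Z) := fun j => {S | ∃ g ∈ F j, ∃ f ∈ F (j + 1),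
    (∀ z, |f z - g z| ≤ 2 * b / 4 ^ j) ∧ a / 2 ^ j < generalizationGap μ S (f - g)}
  have hgeometric : HasSum (fun j : ℕ => δ * (1 / 2) ^ (j + 1)) δ := by
    simpa [pow_succ', mul_assoc] using (hasSum_geometric_two.mul_left 2⁻¹).mul_left δ
  calc (Measure.pi fun _ : Fin N => μ) {S | ∃ f ∈ 𝓕, 8 * b *
          √((D * (1 + Real.log Γ) + Real.log (2 / δ)) / N) < generalizationGap μ S f}
      ≤ (Measure.pi fun _ : Fin N => μ) (⋃ j, E j) := measure_mono fun _ ⟨f, hf, hS⟩ =>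
        Set.mem_iUnion.mpr (exists_chain_link_lt_generalizationGap hN hb.le hf (h𝓕 f hf) hFi hF₀
          hcover (by rw [ha]; linarith))
    _ ≤ ∑' j, (Measure.pi fun _ : Fin N => μ) (E j) := measure_iUnion_le _
    _ ≤ ∑' j : ℕ, ENNReal.ofReal (δ * (1 / 2) ^ (j + 1)) := ENNReal.tsum_le_tsum fun j =>
        measure_exists_chain_link_le D j hN hb hΓ hδ₀ hδ₁ (hFm j) (hFm (j + 1)) (hcard j)
          (hcard (j + 1))
    _ = ENNReal.ofReal δ := by
        rw [← ENNReal.ofReal_tsum_of_nonneg (fun j => by positivity) hgeometric.summable,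
          hgeometric.tsum_eq]

variable {Y : Type*} [PseudoMetricSpace Y] {A : Set Y} {f : Y → Z → ℝ} {G L b : ℝ} {D : ℕ}

theorem HasPolynomialCovers.measure_exists_lt_generalizationGap_le {δ : ℝ}
    (hA : HasPolynomialCovers A G D) (hN : 0 < N) (hb : 0 < b) (hG : 1 ≤ G) (hL : 1 ≤ L)
    (hδ₀ : 0 < δ) (hδ₁ : δ ≤ 1) (hfm : ∀ y ∈ A, Measurable (f y))
    (hfb : ∀ y ∈ A, ∀ z, |f y z| ≤ b)
    (hfL : ∀ y ∈ A, ∀ y' ∈ A, ∀ z, |f y z - f y' z| ≤ b * (L * dist y y')) :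
    (Measure.pi fun _ : Fin N => μ) {S | ∃ y ∈ A,
        8 * b * √((D * (1 + Real.log (G * L)) + Real.log (2 / δ)) / N)
          < generalizationGap μ S (f y)}
      ≤ ENNReal.ofReal δ := by
  have hΓ : 1 ≤ G * L := one_le_mul_of_one_le_of_one_le hG hL
  have hnets : ∀ j : ℕ, ∃ F : Finset (Z → ℝ), (F : Set (Z → ℝ)) ⊆ insert 0 (f '' A) ∧
      (j = 0 → F = {0}) ∧ IsUniformCover (f '' A) (b / 4 ^ j) F ∧
      (F.card : ℝ) ≤ (G * L * 4 ^ j) ^ D := by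
    rintro (_ | j)
    · refine ⟨{0}, by simp, fun _ => rfl, ?_, by simpa using one_le_pow₀ hΓ⟩
      rintro _ ⟨y, hy, rfl⟩
      exact ⟨0, Finset.mem_singleton_self 0, by simpa using hfb y hy⟩
    · obtain ⟨F, hFA, hcover, hcard⟩ := hA.exists_isUniformCover_image hb.le hL hfL
        (ε := (4 ^ (j + 1))⁻¹) (by positivity) (inv_le_one_of_one_le₀ (one_le_pow₀ (by norm_num)))
      refine ⟨F, hFA.trans (Set.subset_insert _ _), by simp, ?_, ?_⟩
      · simpa [div_eq_mul_inv] using hcover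
      · simpa [div_eq_mul_inv] using hcard
  choose F hFA hF₀ hcover hcard using hnets
  have hfi : ∀ g ∈ f '' A, Integrable g μ := by
    rintro _ ⟨y, hy, rfl⟩
    exact integrable_of_abs_le (hfm y hy) (hfb y hy)
  simpa only [Set.exists_mem_image] using
    measure_exists_lt_generalizationGap_le_of_isUniformCover (𝓕 := f '' A) hN hb hΓ hδ₀ hδ₁ hfi
      (fun j g hg => (hFA j hg).elim (fun h => h ▸ measurable_zero)
        (by rintro ⟨y, hy, rfl⟩; exact hfm y hy))
      (fun j g hg => (hFA j hg).elim (fun h => h ▸ integrable_zero _ _ _) (hfi g))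
      (hF₀ 0 rfl) hcover hcard

end Chaining

section OptimizationDependent

theorem extend_mem_pi {ι X : Type*} {K : Set X} {s ts : Finset ι} {y : ts → X} {θ₀ : ι → X}
    (hy : ∀ t, y t ∈ K) (hθ₀ : θ₀ ∈ (s : Set ι).pi fun _ => K) :
    Function.extend Subtype.val y θ₀ ∈ (s : Set ι).pi fun _ => K := by
  intro t ht
  by_cases hts : t ∈ ts
  · lift t to ts using hts
    rw [Subtype.val_injective.extend_apply]
    exact hy t
  · rw [Function.extend_apply' _ _ _ (by simpa using hts)]
    exact hθ₀ t ht

variable {ι X Z : Type*} [NormedAddCommGroup X] [MeasurableSpace Z]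

/-- On parameters whose coordinates in `s` lie in `K`, the loss `f` is measurable, bounded by `b`,
and `b * Λ`-Lipschitz for the `ℓ¹` distance of those coordinates. -/
structure IsLipschitzLoss (K : Set X) (s : Finset ι) (f : (ι → X) → Z → ℝ) (b Λ : ℝ) : Prop where
  measurable : ∀ θ ∈ (s : Set ι).pi fun _ => K, Measurable (f θ)
  abs_le : ∀ θ ∈ (s : Set ι).pi fun _ => K, ∀ z, |f θ z| ≤ b
  abs_sub_le : ∀ θ ∈ (s : Set ι).pi fun _ => K, ∀ θ' ∈ (s : Set ι).pi fun _ => K, ∀ z,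
    |f θ z - f θ' z| ≤ b * (Λ * ∑ t ∈ s, ‖θ t - θ' t‖)

theorem sum_norm_extend_sub_extend_le (s ts : Finset ι) (y y' : ts → X) (θ₀ : ι → X) :
    ∑ t ∈ s, ‖Function.extend Subtype.val y θ₀ t - Function.extend Subtype.val y' θ₀ t‖
      ≤ s.card * dist y y' := by
  rw [← nsmul_eq_mul]
  refine Finset.sum_le_card_nsmul _ _ _ fun t _ => ?_
  by_cases ht : t ∈ ts
  · lift t to ts using ht
    rw [Subtype.val_injective.extend_apply, Subtype.val_injective.extend_apply, ← dist_eq_norm]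
    exact dist_le_pi_dist y y' t
  · have hnot : ¬∃ a : ts, a.val = t := by simpa using ht
    rw [Function.extend_apply' _ _ _ hnot, Function.extend_apply' _ _ _ hnot, sub_self, norm_zero]
    exact dist_nonneg

theorem sum_powerset_exp_neg_le (s : Finset ι) {δ : ℝ} (hδ : 0 ≤ δ) :
    ∑ ts ∈ s.powerset, δ / 2 * Real.exp (-(ts.card * (1 + Real.log s.card))) ≤ δ := by
  rcases s.eq_empty_or_nonempty with rfl | hs
  · simpa using hδ
  have hT : (0 : ℝ) < s.card := by exact_mod_cast hs.card_pos
  have hweight : ∀ ts : Finset ι, Real.exp (-(ts.card * (1 + Real.log s.card)))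
      = (Real.exp (-1) / s.card) ^ ts.card := fun ts => by
    rw [← mul_neg, Real.exp_nat_mul, neg_add, Real.exp_add, Real.exp_neg (Real.log _),
      Real.exp_log hT, div_eq_mul_inv]
  have hbinomial : ∑ ts ∈ s.powerset, (Real.exp (-1) / s.card) ^ ts.card
      = (Real.exp (-1) / s.card + 1) ^ s.card := by
    simpa using Finset.sum_pow_mul_eq_add_pow (Real.exp (-1) / s.card) 1 s
  have htwo : (Real.exp (-1) / s.card + 1) ^ s.card ≤ 2 :=
    calc (Real.exp (-1) / s.card + 1) ^ s.card
        ≤ Real.exp (Real.exp (-1) / s.card) ^ s.card := by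
          gcongr
          exact Real.add_one_le_exp _
      _ = Real.exp (Real.exp (-1)) := by
          rw [← Real.exp_nat_mul, mul_div_cancel₀ _ hT.ne']
      _ ≤ Real.exp (Real.log 2) := by
          gcongr
          linarith [Real.exp_neg_one_lt_d9, Real.log_two_gt_d9]
      _ = 2 := Real.exp_log two_pos
  simp only [hweight, ← Finset.mul_sum, hbinomial]
  linarith [mul_le_mul_of_nonneg_left htwo hδ]

theorem ofReal_one_sub_le_measure_of_measure_compl_le {Ω : Type*} [MeasurableSpace Ω]
    {ν : Measure Ω} [IsProbabilityMeasure ν] {A : Set Ω} {δ : ℝ} (hδ : 0 ≤ δ)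
    (h : ν Aᶜ ≤ ENNReal.ofReal δ) : ENNReal.ofReal (1 - δ) ≤ ν A := by
  rw [ENNReal.ofReal_sub _ hδ, ENNReal.ofReal_one, tsub_le_iff_right, ← measure_univ (μ := ν)]
  exact (measure_univ_le_add_compl A).trans (by gcongr)

theorem sqrt_add_le_sqrt_add_sqrt {x y : ℝ} (hx : 0 ≤ x) (hy : 0 ≤ y) :
    √(x + y) ≤ √x + √y := by
  rw [Real.sqrt_le_left (by positivity), add_sq, Real.sq_sqrt hx, Real.sq_sqrt hy]
  have : 0 ≤ √x * √y := by positivity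
  linarith

theorem entropy_add_log_share_le {Λ T δ : ℝ} (hΛ : 1 ≤ Λ) (hT : 1 ≤ T) (hδ₀ : 0 < δ) (hδ₁ : δ ≤ 1)
    (k d : ℕ) :
    (k * d : ℕ) * (1 + Real.log (3 * (Λ * T)))
        + Real.log (2 / (δ / 2 * Real.exp (-(k * (1 + Real.log T)))))
      ≤ (d * (1 + Real.log (3 * Λ)) + 2) * (k * (1 + Real.log T) + Real.log (2 / δ)) := by
  have hlogT : 0 ≤ Real.log T := Real.log_nonneg hT
  have hlogΛ : 0 ≤ Real.log (3 * Λ) := Real.log_nonneg (by linarith)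
  have hlog2 : Real.log 2 ≤ Real.log (2 / δ) :=
    Real.log_le_log two_pos ((le_div_iff₀ hδ₀).mpr (by linarith))
  have hshare : Real.log (2 / (δ / 2 * Real.exp (-(k * (1 + Real.log T)))))
      = Real.log 2 + Real.log (2 / δ) + k * (1 + Real.log T) := by
    rw [Real.log_div two_ne_zero (by positivity), Real.log_mul (by positivity) (by positivity),
      Real.log_exp, Real.log_div hδ₀.ne' two_ne_zero, Real.log_div two_ne_zero hδ₀.ne']
    ring
  have hΓ : Real.log (3 * (Λ * T)) = Real.log (3 * Λ) + Real.log T := by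
    rw [← mul_assoc, Real.log_mul (by positivity) (by positivity)]
  rw [hshare, hΓ]
  push_cast
  have hu : 0 ≤ Real.log (2 / δ) := (Real.log_nonneg one_le_two).trans hlog2
  have hcross : 0 ≤ (k * d : ℝ) * (Real.log (3 * Λ) * Real.log T) := by positivity
  have hrest : 0 ≤ d * (1 + Real.log (3 * Λ)) * Real.log (2 / δ) + k * (1 + Real.log T) := by
    positivity
  linarith

variable {N : ℕ} {μ : Measure Z} [IsProbabilityMeasure μ] {K : Set X} {s : Finset ι}
  {f : (ι → X) → Z → ℝ} {b Λ δ : ℝ} {θ₀ : ι → X}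

namespace IsLipschitzLoss

theorem generalizationGap_le_piecewise [DecidableEq ι] {S : Fin N → Z} {θ : ι → X}
    (hf : IsLipschitzLoss K s f b Λ) (hN : 0 < N) (hθ₀ : θ₀ ∈ (s : Set ι).pi fun _ => K)
    (hθ : θ ∈ (s : Set ι).pi fun _ => K) (ts : Finset ι) :
    generalizationGap μ S (f θ) ≤ generalizationGap μ S (f (ts.piecewise θ θ₀))
      + 2 * (b * (Λ * ∑ t ∈ s \ ts, ‖θ t - θ₀ t‖)) := by
  have hmix : ts.piecewise θ θ₀ ∈ (s : Set ι).pi fun _ => K := ts.piecewise_mem_set_pi hθ hθ₀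
  have hmove : ∑ t ∈ s, ‖θ t - ts.piecewise θ θ₀ t‖ = ∑ t ∈ s \ ts, ‖θ t - θ₀ t‖ := by
    rw [Finset.sdiff_eq_filter, Finset.sum_filter]
    refine Finset.sum_congr rfl fun t _ => ?_
    by_cases hts : t ∈ ts <;> simp [hts]
  have hsub := hf.abs_sub_le θ hθ _ hmix
  rw [hmove] at hsub
  have hgap := generalizationGap_le_of_abs_le (μ := μ) (S := S) hN hsub
  rw [← sub_le_iff_le_add', ← generalizationGap_sub
    (integrable_of_abs_le (hf.measurable _ hθ) (hf.abs_le _ hθ))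
    (integrable_of_abs_le (hf.measurable _ hmix) (hf.abs_le _ hmix))]
  exact hgap

variable [NormedSpace ℝ X] [FiniteDimensional ℝ X]

theorem measure_exists_lt_generalizationGap_le (hf : IsLipschitzLoss K s f b Λ)
    (hK : K ⊆ Metric.closedBall 0 1) (hθ₀ : θ₀ ∈ (s : Set ι).pi fun _ => K) (hs : s.Nonempty)
    (hN : 0 < N) (hb : 0 < b) (hΛ : 1 ≤ Λ) (hδ₀ : 0 < δ) (hδ₁ : δ ≤ 1) {ts : Finset ι}
    (hts : ts ⊆ s) :
    (Measure.pi fun _ : Fin N => μ) {S | ∃ θ ∈ (s : Set ι).pi fun _ => K,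
        (∀ t ∉ ts, θ t = θ₀ t) ∧
        8 * b * √(((ts.card * Module.finrank ℝ X : ℕ) * (1 + Real.log (3 * (Λ * s.card)))
          + Real.log (2 / δ)) / N) < generalizationGap μ S (f θ)}
      ≤ ENNReal.ofReal δ := by
  let A : Set (ts → X) := Set.univ.pi fun _ => K
  let param : (ts → X) → ι → X := fun y => Function.extend Subtype.val y θ₀
  have hparam : ∀ y ∈ A, param y ∈ (s : Set ι).pi fun _ => K := fun y hy =>
    extend_mem_pi (fun t => hy t trivial) hθ₀
  have hA : A ⊆ Metric.closedBall 0 1 := fun y hy => mem_closedBall_zero_iff.mpr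
    ((pi_norm_le_iff_of_nonneg zero_le_one).mpr fun t =>
      mem_closedBall_zero_iff.mp (hK (hy t trivial)))
  have hcovers := hasPolynomialCovers_of_subset_closedBall hA
  rw [Module.finrank_pi_fintype, Finset.sum_const, Finset.card_univ, Fintype.card_coe,
    smul_eq_mul] at hcovers
  have hL : 1 ≤ Λ * s.card :=
    one_le_mul_of_one_le_of_one_le hΛ (by exact_mod_cast hs.card_pos)
  refine (measure_mono ?_).trans (hcovers.measure_exists_lt_generalizationGap_le
    (f := fun y => f (param y)) hN hb (by norm_num) hL hδ₀ hδ₁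
    (fun y hy => hf.measurable _ (hparam y hy)) (fun y hy => hf.abs_le _ (hparam y hy))
    fun y hy y' hy' z => (hf.abs_sub_le _ (hparam y hy) _ (hparam y' hy') z).trans ?_)
  · rintro S ⟨θ, hθ, hoff, hS⟩
    have hrestrict : param (fun t => θ t) = θ := funext fun t => by
      by_cases ht : t ∈ ts
      · exact Subtype.val_injective.extend_apply (fun t : ts => θ t) θ₀ ⟨t, ht⟩
      · simp only [param]
        rw [Function.extend_apply' _ _ _ (by simpa using ht), hoff t ht]
    exact ⟨fun t => θ t, fun t _ => hθ t (hts t.2), by rwa [hrestrict]⟩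
  · rw [mul_assoc]
    gcongr
    exact sum_norm_extend_sub_extend_le s ts y y' θ₀

/- The subset `ts` receives the share `(e |s|)^{-|ts|}` of half the failure probability. -/
theorem measure_exists_subset_lt_generalizationGap_le (hf : IsLipschitzLoss K s f b Λ)
    (hK : K ⊆ Metric.closedBall 0 1) (hθ₀ : θ₀ ∈ (s : Set ι).pi fun _ => K) (hs : s.Nonempty)
    (hN : 0 < N) (hb : 0 < b) (hΛ : 1 ≤ Λ) (hδ₀ : 0 < δ) (hδ₁ : δ ≤ 1) :
    (Measure.pi fun _ : Fin N => μ) {S | ∃ ts ⊆ s, ∃ θ ∈ (s : Set ι).pi fun _ => K,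
        (∀ t ∉ ts, θ t = θ₀ t) ∧
        8 * b * √((Module.finrank ℝ X * (1 + Real.log (3 * Λ)) + 2)
          * ((ts.card * (1 + Real.log s.card) + Real.log (2 / δ)) / N))
            < generalizationGap μ S (f θ)}
      ≤ ENNReal.ofReal δ := by
  let share : Finset ι → ℝ := fun ts => δ / 2 * Real.exp (-(ts.card * (1 + Real.log s.card)))
  let E : Finset ι → Set (Fin N → Z) := fun ts => {S | ∃ θ ∈ (s : Set ι).pi fun _ => K,
    (∀ t ∉ ts, θ t = θ₀ t) ∧
    8 * b * √(((ts.card * Module.finrank ℝ X : ℕ) * (1 + Real.log (3 * (Λ * s.card)))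
      + Real.log (2 / share ts)) / N) < generalizationGap μ S (f θ)}
  have hT : (1 : ℝ) ≤ s.card := by exact_mod_cast hs.card_pos
  have hshare : ∀ ts : Finset ι, 0 < share ts ∧ share ts ≤ 1 := fun ts => by
    have hexp : Real.exp (-(ts.card * (1 + Real.log s.card))) ≤ 1 := by
      have := Real.log_nonneg hT
      exact Real.exp_le_one_iff.mpr (neg_nonpos.mpr (by positivity))
    refine ⟨by positivity, mul_le_one₀ (by linarith) (Real.exp_pos _).le hexp⟩
  calc _ ≤ (Measure.pi fun _ : Fin N => μ) (⋃ ts ∈ s.powerset, E ts) := measure_mono ?_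
    _ ≤ ∑ ts ∈ s.powerset, (Measure.pi fun _ : Fin N => μ) (E ts) := measure_biUnion_finset_le _ _
    _ ≤ ∑ ts ∈ s.powerset, ENNReal.ofReal (share ts) := Finset.sum_le_sum fun ts hts =>
        hf.measure_exists_lt_generalizationGap_le hK hθ₀ hs hN hb hΛ (hshare ts).1 (hshare ts).2
          (Finset.mem_powerset.mp hts)
    _ = ENNReal.ofReal (∑ ts ∈ s.powerset, share ts) :=
        (ENNReal.ofReal_sum_of_nonneg fun ts _ => (hshare ts).1.le).symm
    _ ≤ ENNReal.ofReal δ := ENNReal.ofReal_le_ofReal (sum_powerset_exp_neg_le s hδ₀.le)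
  rintro S ⟨ts, hts, θ, hθ, hoff, hS⟩
  refine Set.mem_iUnion₂.mpr ⟨ts, Finset.mem_powerset.mpr hts, θ, hθ, hoff, hS.trans_le' ?_⟩
  rw [← mul_div_assoc]
  gcongr
  exact entropy_add_log_share_le hΛ hT hδ₀ hδ₁ _ _

theorem ofReal_one_sub_le_measure_forall_generalizationGap_le [DecidableEq ι]
    (hf : IsLipschitzLoss K s f b Λ)
    (hK : K ⊆ Metric.closedBall 0 1) (hθ₀ : θ₀ ∈ (s : Set ι).pi fun _ => K) (hs : s.Nonempty)
    (hN : 0 < N) (hb : 0 < b) (hΛ : 1 ≤ Λ) (hδ₀ : 0 < δ) (hδ₁ : δ ≤ 1) :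
    ENNReal.ofReal (1 - δ) ≤ (Measure.pi fun _ : Fin N => μ)
      {S | ∀ θ ∈ (s : Set ι).pi fun _ => K, ∀ ts ⊆ s,
        generalizationGap μ S (f θ)
          ≤ (8 * √(Module.finrank ℝ X * (1 + Real.log (3 * Λ)) + 2) + 2 * Λ) * b
            * (√(ts.card * (1 + Real.log s.card) / N) + ∑ t ∈ s \ ts, ‖θ t - θ₀ t‖
              + √(Real.log (2 / δ) / N))} := by
  set κ := Module.finrank ℝ X * (1 + Real.log (3 * Λ)) + 2
  set u := Real.log (2 / δ)
  refine ofReal_one_sub_le_measure_of_measure_compl_le hδ₀.le ((measure_mono fun S hS => ?_).trans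
    (hf.measure_exists_subset_lt_generalizationGap_le hK hθ₀ hs hN hb hΛ hδ₀ hδ₁))
  by_contra hsmall
  simp only [Set.mem_ofPred_eq, not_exists, not_and, not_lt] at hsmall
  refine hS fun θ hθ ts hts => ?_
  have hmix := hsmall ts hts (ts.piecewise θ θ₀) (ts.piecewise_mem_set_pi hθ hθ₀)
    fun t ht => by simp [ht]
  set k := ts.card * (1 + Real.log s.card)
  set move := ∑ t ∈ s \ ts, ‖θ t - θ₀ t‖
  have hlogT : 0 ≤ Real.log s.card := Real.log_natCast_nonneg _
  have hu : 0 ≤ u := Real.log_nonneg ((one_le_div hδ₀).mpr (by linarith))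
  have hk : 0 ≤ k := by positivity
  have hsqrt : √(κ * ((k + u) / N)) ≤ √κ * (√(k / N) + √(u / N)) := by
    rw [Real.sqrt_mul' _ (by positivity), add_div]
    gcongr
    exact sqrt_add_le_sqrt_add_sqrt (by positivity) (by positivity)
  calc generalizationGap μ S (f θ)
      ≤ 8 * b * √(κ * ((k + u) / N)) + 2 * (b * (Λ * move)) :=
        (hf.generalizationGap_le_piecewise hN hθ₀ hθ ts).trans (by gcongr)
    _ ≤ 8 * b * (√κ * (√(k / N) + √(u / N))) + 2 * (b * (Λ * move)) := by gcongr
    _ ≤ (8 * √κ + 2 * Λ) * b * (√(k / N) + move + √(u / N)) := by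
        have hmove : 0 ≤ move := Finset.sum_nonneg fun t _ => norm_nonneg _
        have hcross : 0 ≤ 8 * √κ * b * move + 2 * Λ * b * (√(k / N) + √(u / N)) := by positivity
        linarith

end IsLipschitzLoss

end OptimizationDependent

section QuantumLoss

open scoped Matrix.Norms.L2Operator MatrixOrder

theorem norm_mul_sub_mul_le {R : Type*} [NonUnitalSeminormedRing R] (a b c d : R) :
    ‖a * b - c * d‖ ≤ ‖a‖ * ‖b - d‖ + ‖a - c‖ * ‖d‖ := by
  have hsplit : a * b - c * d = a * (b - d) + (a - c) * d := by noncomm_ring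
  rw [hsplit]
  exact (norm_add_le _ _).trans (add_le_add (norm_mul_le _ _) (norm_mul_le _ _))

theorem sub_kronecker {R l m n p : Type*} [NonUnitalNonAssocRing R] (A B : Matrix l m R)
    (D : Matrix n p R) : (A - B) ⊗ₖ D = A ⊗ₖ D - B ⊗ₖ D :=
  Matrix.ext fun _ _ => sub_mul _ _ _

theorem trace_mul_conjTranspose_mul_self {n : Type*} [Fintype n] (A B : Matrix n n ℂ) :
    (A * (Bᴴ * B)).trace = ∑ i, star (star (B i)) ⬝ᵥ (A *ᵥ star (B i)) := by
  rw [← Matrix.mul_assoc, Matrix.trace_mul_comm]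
  simp only [Matrix.trace, Matrix.diag, Matrix.mul_apply, dotProduct, mulVec, star_star,
    conjTranspose_apply, Pi.star_apply]

variable {n : Type*} [Fintype n] [DecidableEq n]

theorem opNorm_eq_norm (A : Matrix n n ℂ) : opNorm A = ‖A‖ := rfl

theorem norm_le_one_of_mem_unitaryGroup {U : Matrix n n ℂ} (hU : U ∈ Matrix.unitaryGroup n ℂ) :
    ‖U‖ ≤ 1 := by
  rcases subsingleton_or_nontrivial (Matrix n n ℂ) with _ | _
  · rw [Subsingleton.elim U 0, norm_zero]
    exact zero_le_one
  · exact (CStarRing.norm_of_mem_unitary hU).le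

/- `A ↦ A ⊗ₖ 1` is a star homomorphism of C⋆-algebras, hence contractive. -/
theorem norm_kronecker_one_le {k : Type*} [Fintype k] [DecidableEq k] (A : Matrix n n ℂ) :
    ‖A ⊗ₖ (1 : Matrix k k ℂ)‖ ≤ ‖A‖ :=
  NonUnitalStarAlgHom.norm_apply_le
    ({ toFun := fun A => A ⊗ₖ 1
       map_smul' := fun c A => smul_kronecker c A 1
       map_zero' := zero_kronecker 1
       map_add' := fun A B => add_kronecker A B 1
       map_mul' := fun A B => by rw [← mul_kronecker_mul, Matrix.one_mul]
       map_star' := fun A => by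
        simp only [star_eq_conjTranspose, conjTranspose_kronecker, conjTranspose_one] } :
      Matrix n n ℂ →⋆ₙₐ[ℂ] Matrix (n × k) (n × k) ℂ) A

theorem norm_star_dotProduct_mulVec_le (A : Matrix n n ℂ) (x : n → ℂ) :
    ‖star x ⬝ᵥ (A *ᵥ x)‖ ≤ ‖A‖ * (star x ⬝ᵥ x).re := by
  set y : EuclideanSpace ℂ n := WithLp.toLp 2 x
  have hform : star x ⬝ᵥ (A *ᵥ x) = inner ℂ y (Matrix.toEuclideanCLM (𝕜 := ℂ) A y) := by
    simp [y, EuclideanSpace.inner_eq_star_dotProduct, dotProduct_comm]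
  have hnorm : (star x ⬝ᵥ x).re = ‖y‖ ^ 2 := by
    rw [← inner_self_eq_norm_sq (𝕜 := ℂ) y, EuclideanSpace.inner_eq_star_dotProduct,
      dotProduct_comm]
    rfl
  calc ‖star x ⬝ᵥ (A *ᵥ x)‖
      ≤ ‖y‖ * ‖Matrix.toEuclideanCLM (𝕜 := ℂ) A y‖ := hform ▸ norm_inner_le_norm _ _
    _ ≤ ‖y‖ * (‖A‖ * ‖y‖) := by
        gcongr
        exact (Matrix.toEuclideanCLM (𝕜 := ℂ) A).le_opNorm y
    _ = ‖A‖ * (star x ⬝ᵥ x).re := by rw [hnorm]; ring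

theorem norm_trace_mul_le_of_posSemidef (A : Matrix n n ℂ) {ρ : Matrix n n ℂ}
    (hρ : ρ.PosSemidef) : ‖(A * ρ).trace‖ ≤ ‖A‖ * ρ.trace.re := by
  obtain ⟨B, rfl⟩ := CStarAlgebra.nonneg_iff_eq_star_mul_self.mp hρ.nonneg
  rw [star_eq_conjTranspose]
  have htrace : (Bᴴ * B).trace = ∑ i, star (star (B i)) ⬝ᵥ star (B i) := by
    simpa using trace_mul_conjTranspose_mul_self 1 B
  rw [trace_mul_conjTranspose_mul_self, htrace, Complex.re_sum, Finset.mul_sum]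
  exact (norm_sum_le _ _).trans
    (Finset.sum_le_sum fun i _ => norm_star_dotProduct_mulVec_le A (star (B i)))

theorem norm_conjTranspose_mul_mul_sub_le {A F G : Matrix n n ℂ} (hF : ‖F‖ ≤ 1) (hG : ‖G‖ ≤ 1) :
    ‖Fᴴ * A * F - Gᴴ * A * G‖ ≤ ‖A‖ * (2 * ‖F - G‖) := by
  have hleft : ‖Fᴴ * A‖ ≤ ‖A‖ := (norm_mul_le _ _).trans
    (mul_le_of_le_one_left (norm_nonneg A) (by rwa [l2_opNorm_conjTranspose]))
  have hdiff : ‖Fᴴ * A - Gᴴ * A‖ ≤ ‖F - G‖ * ‖A‖ := by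
    rw [← Matrix.sub_mul, ← conjTranspose_sub, ← l2_opNorm_conjTranspose (F - G)]
    exact norm_mul_le _ _
  calc ‖Fᴴ * A * F - Gᴴ * A * G‖
      ≤ ‖Fᴴ * A‖ * ‖F - G‖ + ‖Fᴴ * A - Gᴴ * A‖ * ‖G‖ := norm_mul_sub_mul_le _ _ _ _
    _ ≤ ‖A‖ * ‖F - G‖ + ‖F - G‖ * ‖A‖ * 1 := by gcongr
    _ = ‖A‖ * (2 * ‖F - G‖) := by ring

variable {m T : ℕ} {V : ℕ → Matrix (Fin 4 × Fin m) (Fin 4 × Fin m) ℂ}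
  {U W : ℕ → Matrix (Fin 4) (Fin 4) ℂ}

theorem circuit_mem_unitaryGroup (hV : ∀ s ≤ T, V s ∈ Matrix.unitaryGroup (Fin 4 × Fin m) ℂ)
    (hU : ∀ t < T, U t ∈ Matrix.unitaryGroup (Fin 4) ℂ) :
    circuit V U T ∈ Matrix.unitaryGroup (Fin 4 × Fin m) ℂ := by
  induction T with
  | zero => exact hV 0 le_rfl
  | succ T ih =>
    exact mul_mem (mul_mem (hV _ le_rfl) (kronecker_mem_unitary (hU T T.lt_succ_self) (one_mem _)))
      (ih (fun s hs => hV s (by omega)) fun t ht => hU t (by omega))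

theorem norm_circuit_sub_le (hV : ∀ s ≤ T, V s ∈ Matrix.unitaryGroup (Fin 4 × Fin m) ℂ)
    (hU : ∀ t < T, U t ∈ Matrix.unitaryGroup (Fin 4) ℂ)
    (hW : ∀ t < T, W t ∈ Matrix.unitaryGroup (Fin 4) ℂ) :
    ‖circuit V U T - circuit V W T‖ ≤ ∑ t ∈ Finset.range T, ‖U t - W t‖ := by
  induction T with
  | zero => simp [circuit]
  | succ T ih =>
    have hV' : ∀ s ≤ T, V s ∈ Matrix.unitaryGroup (Fin 4 × Fin m) ℂ := fun s hs => hV s (by omega)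
    have hW' : ∀ t < T, W t ∈ Matrix.unitaryGroup (Fin 4) ℂ := fun t ht => hW t (by omega)
    have hrest := ih hV' (fun t ht => hU t (by omega)) hW'
    have hcircuit := norm_le_one_of_mem_unitaryGroup (circuit_mem_unitaryGroup hV' hW')
    have hlayer : ‖V (T + 1) * (U T ⊗ₖ (1 : Matrix (Fin m) (Fin m) ℂ))‖ ≤ 1 :=
      norm_le_one_of_mem_unitaryGroup
        (mul_mem (hV _ le_rfl) (kronecker_mem_unitary (hU T T.lt_succ_self) (one_mem _)))
    have hgate : ‖V (T + 1) * (U T ⊗ₖ (1 : Matrix (Fin m) (Fin m) ℂ))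
        - V (T + 1) * (W T ⊗ₖ (1 : Matrix (Fin m) (Fin m) ℂ))‖ ≤ ‖U T - W T‖ := by
      rw [← Matrix.mul_sub, ← sub_kronecker]
      exact ((norm_mul_le _ _).trans (mul_le_of_le_one_left (norm_nonneg _)
        (norm_le_one_of_mem_unitaryGroup (hV _ le_rfl)))).trans (norm_kronecker_one_le _)
    rw [Finset.sum_range_succ]
    calc ‖circuit V U (T + 1) - circuit V W (T + 1)‖ ≤ _ := norm_mul_sub_mul_le _ _ _ _
      _ ≤ 1 * ∑ t ∈ Finset.range T, ‖U t - W t‖ + ‖U T - W T‖ * 1 := by gcongr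
      _ = _ := by ring

variable {Z : Type*} {ρ O : Z → Matrix (Fin 4 × Fin m) (Fin 4 × Fin m) ℂ} {C : ℝ}

theorem qloss_eq_re_trace (z : Z) :
    qloss V T O ρ U z = ((circuit V U T)ᴴ * O z * circuit V U T * ρ z).trace.re := by
  rw [qloss, Matrix.trace_mul_comm]
  simp only [Matrix.mul_assoc]

theorem measurable_qloss [MeasurableSpace Z] (hρ : ∀ p q, Measurable fun z => ρ z p q)
    (hO : ∀ p q, Measurable fun z => O z p q) : Measurable (qloss V T O ρ U) := by
  unfold qloss
  simp only [Matrix.trace, Matrix.diag, Matrix.mul_apply]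
  fun_prop

theorem abs_qloss_le (hV : ∀ s ≤ T, V s ∈ Matrix.unitaryGroup (Fin 4 × Fin m) ℂ)
    (hρ : ∀ z, (ρ z).PosSemidef ∧ (ρ z).trace = 1)
    (hU : ∀ t < T, U t ∈ Matrix.unitaryGroup (Fin 4) ℂ) (z : Z) :
    |qloss V T O ρ U z| ≤ ‖O z‖ := by
  have hF := circuit_mem_unitaryGroup hV hU
  calc |qloss V T O ρ U z|
      ≤ ‖((circuit V U T)ᴴ * O z * circuit V U T * ρ z).trace‖ :=
        qloss_eq_re_trace (V := V) z ▸ Complex.abs_re_le_norm _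
    _ ≤ ‖(circuit V U T)ᴴ * O z * circuit V U T‖ := by
        simpa [(hρ z).2] using norm_trace_mul_le_of_posSemidef _ (hρ z).1
    _ = ‖O z‖ := by
        rw [CStarRing.norm_mul_mem_unitary _ hF, ← star_eq_conjTranspose,
          CStarRing.norm_mem_unitary_mul _ (Unitary.star_mem hF)]

theorem abs_qloss_sub_le (hV : ∀ s ≤ T, V s ∈ Matrix.unitaryGroup (Fin 4 × Fin m) ℂ)
    (hρ : ∀ z, (ρ z).PosSemidef ∧ (ρ z).trace = 1)
    (hU : ∀ t < T, U t ∈ Matrix.unitaryGroup (Fin 4) ℂ)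
    (hW : ∀ t < T, W t ∈ Matrix.unitaryGroup (Fin 4) ℂ) (z : Z) :
    |qloss V T O ρ U z - qloss V T O ρ W z|
      ≤ ‖O z‖ * (2 * ∑ t ∈ Finset.range T, ‖U t - W t‖) := by
  rw [qloss_eq_re_trace, qloss_eq_re_trace, ← Complex.sub_re, ← Matrix.trace_sub, ← Matrix.sub_mul]
  set F := circuit V U T
  set G := circuit V W T
  have hF : ‖F‖ ≤ 1 := norm_le_one_of_mem_unitaryGroup (circuit_mem_unitaryGroup hV hU)
  have hG : ‖G‖ ≤ 1 := norm_le_one_of_mem_unitaryGroup (circuit_mem_unitaryGroup hV hW)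
  calc |((Fᴴ * O z * F - Gᴴ * O z * G) * ρ z).trace.re|
      ≤ ‖((Fᴴ * O z * F - Gᴴ * O z * G) * ρ z).trace‖ := Complex.abs_re_le_norm _
    _ ≤ ‖Fᴴ * O z * F - Gᴴ * O z * G‖ := by
        simpa [(hρ z).2] using norm_trace_mul_le_of_posSemidef _ (hρ z).1
    _ ≤ ‖O z‖ * (2 * ‖F - G‖) := norm_conjTranspose_mul_mul_sub_le hF hG
    _ ≤ ‖O z‖ * (2 * ∑ t ∈ Finset.range T, ‖U t - W t‖) := by
        gcongr
        exact norm_circuit_sub_le hV hU hW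

theorem isLipschitzLoss_qloss [MeasurableSpace Z]
    (hV : ∀ s ≤ T, V s ∈ Matrix.unitaryGroup (Fin 4 × Fin m) ℂ)
    (hρ_meas : ∀ p q, Measurable fun z => ρ z p q)
    (hρ : ∀ z, (ρ z).PosSemidef ∧ (ρ z).trace = 1)
    (hO_meas : ∀ p q, Measurable fun z => O z p q) (hO : ∀ z, opNorm (O z) ≤ C) :
    IsLipschitzLoss (Matrix.unitaryGroup (Fin 4) ℂ : Set (Matrix (Fin 4) (Fin 4) ℂ))
      (Finset.range T) (qloss V T O ρ) C 2 where
  measurable _ _ := measurable_qloss hρ_meas hO_meas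
  abs_le θ hθ z := (abs_qloss_le hV hρ (fun t ht => hθ t (by simpa using ht)) z).trans (hO z)
  abs_sub_le θ hθ θ' hθ' z :=
    (abs_qloss_sub_le hV hρ (fun t ht => hθ t (by simpa using ht))
      (fun t ht => hθ' t (by simpa using ht)) z).trans (by gcongr; exact hO z)

theorem optimization_dependent_qmlm_generalization_general :
    ∃ c : ℝ, 0 < c ∧
      ∀ (m T N : ℕ), 0 < T → 0 < N →
      ∀ V : ℕ → Matrix (Fin 4 × Fin m) (Fin 4 × Fin m) ℂ,
        (∀ s ≤ T, V s ∈ Matrix.unitaryGroup (Fin 4 × Fin m) ℂ) →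
      ∀ U₀ : ℕ → Matrix (Fin 4) (Fin 4) ℂ,
        (∀ t < T, U₀ t ∈ Matrix.unitaryGroup (Fin 4) ℂ) →
      ∀ (Z : Type*) (_ : MeasurableSpace Z) (μ : Measure Z), IsProbabilityMeasure μ →
      ∀ ρ : Z → Matrix (Fin 4 × Fin m) (Fin 4 × Fin m) ℂ,
        (∀ p q, Measurable fun z => ρ z p q) →
        (∀ z, (ρ z).PosSemidef ∧ (ρ z).trace = 1) →
      ∀ C : ℝ, 0 < C →
      ∀ O : Z → Matrix (Fin 4 × Fin m) (Fin 4 × Fin m) ℂ,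
        (∀ p q, Measurable fun z => O z p q) →
        (∀ z, opNorm (O z) ≤ C) →
      ∀ δ : ℝ, 0 < δ → δ < 1 →
        ENNReal.ofReal (1 - δ) ≤
          (Measure.pi fun _ : Fin N => μ) {S | ∀ U : ℕ → Matrix (Fin 4) (Fin 4) ℂ,
            (∀ t < T, U t ∈ Matrix.unitaryGroup (Fin 4) ℂ) →
            ∀ ts : Finset ℕ, ts ⊆ Finset.range T →
            generalizationGap μ S (qloss V T O ρ U)
              ≤ c * C * (Real.sqrt (ts.card * (1 + Real.log T) / N)
                  + ∑ t ∈ Finset.range T \ ts, opNorm (U t - U₀ t)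
                  + Real.sqrt (Real.log (2 / δ) / N))} := by
  refine ⟨8 * √(Module.finrank ℝ (Matrix (Fin 4) (Fin 4) ℂ) * (1 + Real.log (3 * 2)) + 2) + 2 * 2,
    by positivity, ?_⟩
  intro m T N hT hN V hV U₀ hU₀ Z _ μ _ ρ hρ_meas hρ C hC O hO_meas hO δ hδ₀ hδ₁
  have hbound := (isLipschitzLoss_qloss hV hρ_meas hρ hO_meas hO)
    |>.ofReal_one_sub_le_measure_forall_generalizationGap_le (μ := μ) (θ₀ := U₀)
    (fun U hU => mem_closedBall_zero_iff.mpr (norm_le_one_of_mem_unitaryGroup hU))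
    (fun t ht => hU₀ t (by simpa using ht)) (by simpa using hT.ne') hN hC one_le_two hδ₀ hδ₁.le
  simpa only [Set.mem_pi, Finset.coe_range, Set.mem_Iio, Finset.card_range, SetLike.mem_coe,
    opNorm_eq_norm]
    using hbound

end QuantumLoss

/-- Optimization-dependent generalization bound: for every parameter setting `θ`, every
`K ∈ {0,…,T}` and every set `ts` of `K` pairwise distinct indices, the generalization error is
bounded by `c·C·(√(K(1+log T)/N) + Σ_{t ∉ ts} ‖U_t − U⁰_t‖ + √(log(2/δ)/N))`. -/
theorem optimization_dependent_qmlm_generalization :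
    ∃ c : ℝ, 0 < c ∧
      ∀ (m T N : ℕ), 0 < m → 0 < T → 0 < N →
      ∀ V : ℕ → Matrix (Fin 4 × Fin m) (Fin 4 × Fin m) ℂ,
        (∀ s ≤ T, V s ∈ Matrix.unitaryGroup (Fin 4 × Fin m) ℂ) →
      ∀ U₀ : ℕ → Matrix (Fin 4) (Fin 4) ℂ,
        (∀ t < T, U₀ t ∈ Matrix.unitaryGroup (Fin 4) ℂ) →
      ∀ (Z : Type) (_ : MeasurableSpace Z) (μ : Measure Z), IsProbabilityMeasure μ →
      ∀ ρ : Z → Matrix (Fin 4 × Fin m) (Fin 4 × Fin m) ℂ,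
        (∀ p q, Measurable fun z => ρ z p q) →
        (∀ z, (ρ z).PosSemidef ∧ (ρ z).trace = 1) →
      ∀ C : ℝ, 0 < C →
      ∀ O : Z → Matrix (Fin 4 × Fin m) (Fin 4 × Fin m) ℂ,
        (∀ p q, Measurable fun z => O z p q) →
        (∀ z, (O z).IsHermitian ∧ opNorm (O z) ≤ C) →
      ∀ δ : ℝ, 0 < δ → δ < 1 →
        ENNReal.ofReal (1 - δ) ≤
          (Measure.pi fun _ : Fin N => μ) {S | ∀ U : ℕ → Matrix (Fin 4) (Fin 4) ℂ,
            (∀ t < T, U t ∈ Matrix.unitaryGroup (Fin 4) ℂ) →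
            ∀ ts : Finset ℕ, ts ⊆ Finset.range T →
            (∫ z, qloss V T O ρ U z ∂μ) - (1 / N) * ∑ i, qloss V T O ρ U (S i)
              ≤ c * C * (Real.sqrt (ts.card * (1 + Real.log T) / N)
                  + ∑ t ∈ Finset.range T \ ts, opNorm (U t - U₀ t)
                  + Real.sqrt (Real.log (2 / δ) / N))} := by
  obtain ⟨c, hc, hbound⟩ := optimization_dependent_qmlm_generalization_general.{0}
  exact ⟨c, hc, fun m T N _ hT hN V hV U₀ hU₀ Z _ μ hμ ρ hρ_meas hρ C hC O hO_meas hO =>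
    hbound m T N hT hN V hV U₀ hU₀ Z _ μ hμ ρ hρ_meas hρ C hC O hO_meas fun z => (hO z).2⟩
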